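/- arXiv:1410.7156 — 2 statements merged into one kernel-verified Lean document; each statement's English description precedes it below -/
import Mathlib

section
/- Suppose 1 ≤ i ≤ n−1 and w_i ≠ w_{i+1}. Then both projections Z(k̲)^i_w̲ → Y(k̲)_w̲ (forgetting L'_i) and Z(k̲)^i_w̲ → Y(s_i·k̲)_{s_i·w̲} (forgetting L_i) are bijections; that is, Z(k̲)^i_w̲ is the graph of a bijection between Y(k̲)_w̲ and Y(s_i·k̲)_{s_i·w̲}. -/
open Polynomial

set_option synthInstance.maxHeartbeats 1000000
set_option maxHeartbeats 1000000

noncomputable section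

abbrev KM (m : ℕ) := Fin m → RatFunc ℂ

abbrev SubM (m : ℕ) := Submodule (Polynomial ℂ) (KM m)

def polyL0 (m : ℕ) : SubM m :=
  Submodule.pi Set.univ fun _ => LinearMap.range (Algebra.linearMap (Polynomial ℂ) (RatFunc ℂ))

abbrev QuotMod (m : ℕ) (A B : SubM m) := ↥B ⧸ (A.comap B.subtype)

def fdim (m : ℕ) (A B : SubM m) : ℕ := Module.finrank ℂ (QuotMod m A B)

def zmul (m : ℕ) (w : ℂ) : KM m →ₗ[Polynomial ℂ] KM m :=
  (Polynomial.X - Polynomial.C w) • LinearMap.id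

def quotSmul (m : ℕ) (p : Polynomial ℂ) (A B : SubM m) :
    QuotMod m A B →ₗ[ℂ] QuotMod m A B where
  toFun v := p • v
  map_add' x y := smul_add p x y
  map_smul' c x := smul_comm p c x

def IsYChain (m n : ℕ) (k : ℕ → ℕ) (w : ℕ → ℂ) (L : ℕ → SubM m) : Prop :=
  L 0 = polyL0 m ∧
  (∀ i < n, L i ≤ L (i + 1)) ∧
  (∀ i < n, FiniteDimensional ℂ (QuotMod m (L i) (L (i + 1)))) ∧
  (∀ i < n, fdim m (L i) (L (i + 1)) = k (i + 1)) ∧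
  (∀ i < n, ∀ x ∈ L (i + 1), zmul m (w (i + 1)) x ∈ L i)

/-- `s_i` : exchanging the `i`-th and `(i+1)`-st entries of a sequence. -/
def swapAt {α : Type*} (i : ℕ) (f : ℕ → α) : ℕ → α :=
  fun j => if j = i then f (i + 1) else if j = i + 1 then f i else f j

/-- The correspondence `Z(k)^i_w ⊆ Y(k)_w × Y(s_i·k)_{s_i·w}`. -/
def IsZPair (m n i : ℕ) (k : ℕ → ℕ) (w : ℕ → ℂ) (L L' : ℕ → SubM m) : Prop :=
  IsYChain m n k w L ∧ IsYChain m n (swapAt i k) (swapAt i w) L' ∧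
  ∀ j, j ≠ i → L j = L' j

/-!
Only the two steps `A ⊆ B ⊆ C` around position `i` matter. Since `a = z - w_i` and `b = z - w_{i+1}`
are coprime and `ab` kills `C / A`, this quotient is the direct sum of its `a`-torsion and its
`b`-torsion, and `B / A` is the `a`-torsion. The only submodule that can replace `B` once the two
steps are exchanged is therefore the one given by the `b`-torsion of `C / A`, and the second
isomorphism theorem identifies the new subquotients with the old ones in the opposite order.
-/

section Torsion

variable {R M : Type*} [CommSemiring R] [AddCommMonoid M] [Module R M]
  {a b : R} {A B C : Submodule R M}

theorem mem_of_isCoprime_of_smul_mem (hab : IsCoprime a b) {x : M}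
    (ha : a • x ∈ A) (hb : b • x ∈ A) : x ∈ A := by
  obtain ⟨u, v, huv⟩ := hab
  have hx : u • a • x + v • b • x = x := by
    rw [smul_smul, smul_smul, ← add_smul, huv, one_smul]
  exact hx ▸ A.add_mem (A.smul_mem u ha) (A.smul_mem v hb)

/-- The elements of `C` that `b` carries into `A`. When `A ≤ C`, this is the preimage in `C` of the
`b`-torsion of `C / A`. -/
def torsionOver (b : R) (A C : Submodule R M) : Submodule R M :=
  C ⊓ A.comap (LinearMap.lsmul R M b)

theorem mem_torsionOver {x : M} : x ∈ torsionOver b A C ↔ x ∈ C ∧ b • x ∈ A :=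
  Iff.rfl

theorem inf_torsionOver (hab : IsCoprime a b) (hAB : A ≤ B) (hBC : B ≤ C)
    (ha : ∀ x ∈ B, a • x ∈ A) : B ⊓ torsionOver b A C = A := by
  apply le_antisymm
  · rintro x ⟨hxB, hx⟩
    exact mem_of_isCoprime_of_smul_mem hab (ha x hxB) (mem_torsionOver.1 hx).2
  · exact fun x hx => ⟨hAB hx, mem_torsionOver.2 ⟨hBC (hAB hx), A.smul_mem b hx⟩⟩

theorem sup_torsionOver (hab : IsCoprime a b) (hBC : B ≤ C)
    (ha : ∀ x ∈ B, a • x ∈ A) (hb : ∀ x ∈ C, b • x ∈ B) : B ⊔ torsionOver b A C = C := by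
  refine le_antisymm (sup_le hBC inf_le_left) fun x hx => ?_
  have hax : a • x ∈ torsionOver b A C :=
    mem_torsionOver.2 ⟨C.smul_mem a hx, smul_comm a b x ▸ ha _ (hb x hx)⟩
  exact mem_of_isCoprime_of_smul_mem hab (Submodule.mem_sup_right hax)
    (Submodule.mem_sup_left (hb x hx))

theorem eq_torsionOver (hab : IsCoprime a b) (hAB : A ≤ B) (hBC : B ≤ C)
    (hb : ∀ x ∈ B, b • x ∈ A) (ha : ∀ x ∈ C, a • x ∈ B) : B = torsionOver b A C := by
  apply le_antisymm
  · exact fun x hx => mem_torsionOver.2 ⟨hBC hx, hb x hx⟩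
  · intro x hx
    obtain ⟨hxC, hbx⟩ := mem_torsionOver.1 hx
    exact mem_of_isCoprime_of_smul_mem hab (ha x hxC) (hAB hbx)

end Torsion

section SwapAt

variable {α β : Type*} (i : ℕ) (f : ℕ → α)

theorem swapAt_left : swapAt i f i = f (i + 1) :=
  if_pos rfl

theorem swapAt_right : swapAt i f (i + 1) = f i := by
  simp [swapAt]

variable {i} in
theorem swapAt_of_ne {j : ℕ} (hj : j ≠ i) (hj' : j ≠ i + 1) : swapAt i f j = f j := by
  simp [swapAt, hj, hj']

theorem swapAt_swapAt : swapAt i (swapAt i f) = f := by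
  funext j
  rcases eq_or_ne j i with rfl | hj
  · rw [swapAt_left, swapAt_right]
  rcases eq_or_ne j (i + 1) with rfl | hj'
  · rw [swapAt_right, swapAt_left]
  · rw [swapAt_of_ne _ hj hj', swapAt_of_ne _ hj hj']

theorem swapAt_comp (g : α → β) : swapAt i (fun j => g (f j)) = fun j => g (swapAt i f j) := by
  funext j
  simp only [swapAt, apply_ite g]

end SwapAt

section HeckeModification

variable (F : Type*) {R M : Type*} [Field F] [CommRing R] [Algebra F R] [AddCommGroup M]
  [Module R M] [Module F M] [IsScalarTower F R M]

/-- `B` is a Hecke modification of `A` at `r` of size `k`: an overmodule whose quotient by `A` is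
killed by `r` and has dimension `k` over the base field `F`. Finiteness is a separate condition
because `Module.finrank` vanishes on infinite-dimensional spaces. -/
structure IsHeckeModification (r : R) (k : ℕ) (A B : Submodule R M) : Prop where
  le : A ≤ B
  finite : Module.Finite F (B ⧸ A.comap B.subtype)
  finrank_eq : Module.finrank F (B ⧸ A.comap B.subtype) = k
  smul_mem : ∀ x ∈ B, r • x ∈ A

namespace IsHeckeModification

variable {F} {a b r : R} {k l : ℕ} {A B C P Q : Submodule R M}

theorem inf_iff_sup :
    IsHeckeModification F r k (P ⊓ Q) P ↔ IsHeckeModification F r k Q (P ⊔ Q) := by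
  let e : (P ⧸ (P ⊓ Q).comap P.subtype) ≃ₗ[F] (P ⊔ Q : Submodule R M) ⧸ Q.comap (P ⊔ Q).subtype :=
    (LinearMap.quotientInfEquivSupQuotient P Q).restrictScalars F
  constructor
  · intro h
    have := h.finite
    refine ⟨le_sup_right, .equiv e, e.finrank_eq.symm.trans h.finrank_eq, fun x hx => ?_⟩
    obtain ⟨p, hp, q, hq, rfl⟩ := Submodule.mem_sup.1 hx
    exact smul_add r p q ▸ Q.add_mem (h.smul_mem p hp).2 (Q.smul_mem r hq)
  · intro h
    have := h.finite
    exact ⟨inf_le_left, .equiv e.symm, e.finrank_eq.trans h.finrank_eq,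
      fun x hx => ⟨P.smul_mem r hx, h.smul_mem x (Submodule.mem_sup_left hx)⟩⟩

theorem existsUnique_swap (hab : IsCoprime a b) (hAB : IsHeckeModification F a k A B)
    (hBC : IsHeckeModification F b l B C) :
    ∃! B', IsHeckeModification F b l A B' ∧ IsHeckeModification F a k B' C := by
  have hinf : B ⊓ torsionOver b A C = A := inf_torsionOver hab hAB.le hBC.le hAB.smul_mem
  have hsup : B ⊔ torsionOver b A C = C :=
    sup_torsionOver hab hBC.le hAB.smul_mem hBC.smul_mem
  refine ⟨torsionOver b A C, ⟨?_, ?_⟩, fun B' ⟨hAB', hB'C⟩ =>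
    eq_torsionOver hab hAB'.le hB'C.le hAB'.smul_mem hB'C.smul_mem⟩
  · have h := inf_iff_sup (P := torsionOver b A C) (Q := B) (F := F) (r := b) (k := l)
    rw [inf_comm, sup_comm, hinf, hsup] at h
    exact h.2 hBC
  · have h := inf_iff_sup (P := B) (Q := torsionOver b A C) (F := F) (r := a) (k := k)
    rw [hinf, hsup] at h
    exact h.1 hAB

end IsHeckeModification

/-- The sequence `L` starts at `L₀` and its first `n` steps are Hecke modifications, the step from
`L j` to `L (j + 1)` being at `r (j + 1)` of size `k (j + 1)`. The values `L j` with `n < j` are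
unconstrained. -/
def IsHeckeChain (L₀ : Submodule R M) (n : ℕ) (k : ℕ → ℕ) (r : ℕ → R)
    (L : ℕ → Submodule R M) : Prop :=
  L 0 = L₀ ∧ ∀ j < n, IsHeckeModification F (r (j + 1)) (k (j + 1)) (L j) (L (j + 1))

/-- The correspondence between the chains for `k`, `r` and those for the sequences with the entries
at `i` and `i + 1` exchanged: two chains correspond when they agree away from `i`. -/
def IsHeckePair (L₀ : Submodule R M) (n i : ℕ) (k : ℕ → ℕ) (r : ℕ → R)
    (L L' : ℕ → Submodule R M) : Prop :=
  IsHeckeChain F L₀ n k r L ∧ IsHeckeChain F L₀ n (swapAt i k) (swapAt i r) L' ∧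
    ∀ j, j ≠ i → L j = L' j

variable {F} {L₀ : Submodule R M} {n i p : ℕ} {k : ℕ → ℕ} {r : ℕ → R} {L L' : ℕ → Submodule R M}

theorem IsHeckeChain.update_swapAt_iff (hL : IsHeckeChain F L₀ n k r L) (hp : p + 1 < n)
    (B : Submodule R M) :
    IsHeckeChain F L₀ n (swapAt (p + 1) k) (swapAt (p + 1) r) (Function.update L (p + 1) B) ↔
      IsHeckeModification F (r (p + 2)) (k (p + 2)) (L p) B ∧
        IsHeckeModification F (r (p + 1)) (k (p + 1)) B (L (p + 2)) := by
  have hself : Function.update L (p + 1) B (p + 1) = B := Function.update_self ..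
  have hne : ∀ j, j ≠ p + 1 → Function.update L (p + 1) B j = L j :=
    fun j hj => Function.update_of_ne hj ..
  constructor
  · rintro ⟨-, hstep⟩
    have hfst := hstep p (by lia)
    have hsnd := hstep (p + 1) hp
    rw [hself, hne p (by lia), swapAt_left, swapAt_left] at hfst
    rw [hself, hne (p + 1 + 1) (by lia), swapAt_right, swapAt_right] at hsnd
    exact ⟨hfst, hsnd⟩
  · rintro ⟨hfst, hsnd⟩
    refine ⟨(hne 0 (by lia)).trans hL.1, fun j hj => ?_⟩
    rcases eq_or_ne j p with rfl | hjp
    · rwa [hself, hne j (by lia), swapAt_left, swapAt_left]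
    rcases eq_or_ne j (p + 1) with rfl | hjp'
    · rwa [hself, hne (p + 1 + 1) (by lia), swapAt_right, swapAt_right]
    · rw [hne j hjp', hne (j + 1) (by lia), swapAt_of_ne _ (by lia) (by lia),
        swapAt_of_ne _ (by lia) (by lia)]
      exact hL.2 j hj

theorem IsHeckeChain.existsUnique_isHeckePair (hL : IsHeckeChain F L₀ n k r L) (hi : 1 ≤ i)
    (hin : i + 1 ≤ n) (hr : IsCoprime (r i) (r (i + 1))) :
    ∃! L', IsHeckePair F L₀ n i k r L L' := by
  obtain ⟨p, rfl⟩ := Nat.exists_eq_add_of_le' hi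
  obtain ⟨B, hB, huniq⟩ :=
    IsHeckeModification.existsUnique_swap hr (hL.2 p (by lia)) (hL.2 (p + 1) hin)
  refine ⟨Function.update L (p + 1) B, ⟨hL, (hL.update_swapAt_iff hin B).2 hB,
    fun j hj => (Function.update_of_ne hj ..).symm⟩, ?_⟩
  rintro L' ⟨-, hL', hagree⟩
  have hupdate : L' = Function.update L (p + 1) (L' (p + 1)) :=
    Function.eq_update_iff.2 ⟨rfl, fun j hj => (hagree j hj).symm⟩
  rw [hupdate] at hL'
  rw [hupdate, huniq _ ((hL.update_swapAt_iff hin _).1 hL')]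

theorem isHeckePair_swapAt_comm :
    IsHeckePair F L₀ n i (swapAt i k) (swapAt i r) L' L ↔ IsHeckePair F L₀ n i k r L L' := by
  simp only [IsHeckePair, swapAt_swapAt, eq_comm (a := L' _), and_left_comm]

variable (F L₀ k r) in
theorem statement4_general (hi : 1 ≤ i) (hin : i + 1 ≤ n) (hr : IsCoprime (r i) (r (i + 1))) :
    (∀ L, IsHeckeChain F L₀ n k r L → ∃! L', IsHeckePair F L₀ n i k r L L') ∧
    (∀ L', IsHeckeChain F L₀ n (swapAt i k) (swapAt i r) L' →
      ∃! L, IsHeckePair F L₀ n i k r L L') := by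
  refine ⟨fun L hL => hL.existsUnique_isHeckePair hi hin hr, fun L' hL' => ?_⟩
  have hr' : IsCoprime (swapAt i r i) (swapAt i r (i + 1)) := by
    rw [swapAt_left, swapAt_right]
    exact hr.symm
  simpa only [isHeckePair_swapAt_comm] using hL'.existsUnique_isHeckePair hi hin hr'

end HeckeModification

section Lattices

variable {m n i : ℕ} {k : ℕ → ℕ} {w : ℕ → ℂ} {L L' : ℕ → SubM m}

theorem isYChain_iff_isHeckeChain :
    IsYChain m n k w L ↔ IsHeckeChain ℂ (polyL0 m) n k (fun j => X - C (w j)) L := by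
  constructor
  · rintro ⟨hzero, hle, hfinite, hfinrank, hmem⟩
    exact ⟨hzero, fun j hj => ⟨hle j hj, hfinite j hj, hfinrank j hj, hmem j hj⟩⟩
  · rintro ⟨hzero, hstep⟩
    exact ⟨hzero, fun j hj => (hstep j hj).le, fun j hj => (hstep j hj).finite,
      fun j hj => (hstep j hj).finrank_eq, fun j hj => (hstep j hj).smul_mem⟩

theorem isZPair_iff_isHeckePair :
    IsZPair m n i k w L L' ↔ IsHeckePair ℂ (polyL0 m) n i k (fun j => X - C (w j)) L L' := by
  rw [IsZPair, IsHeckePair, isYChain_iff_isHeckeChain, isYChain_iff_isHeckeChain,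
    swapAt_comp i w fun c => X - C c]

end Lattices

/-- if `w_i ≠ w_{i+1}` then both projections from `Z(k)^i_w` are bijections,
i.e. `Z(k)^i_w` is the graph of a bijection `Y(k)_w ↔ Y(s_i·k)_{s_i·w}`. -/
theorem statement4 (m : ℕ) (hm : 2 ≤ m) (n : ℕ) (k : ℕ → ℕ) (w : ℕ → ℂ)
    (hk : ∀ j, 1 ≤ j → j ≤ n → 1 ≤ k j ∧ k j ≤ m - 1)
    (i : ℕ) (hi : 1 ≤ i) (hin : i + 1 ≤ n) (hw : w i ≠ w (i + 1)) :
    (∀ L : ℕ → SubM m, IsYChain m n k w L →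
        ∃! L' : ℕ → SubM m, IsZPair m n i k w L L') ∧
    (∀ L' : ℕ → SubM m, IsYChain m n (swapAt i k) (swapAt i w) L' →
        ∃! L : ℕ → SubM m, IsZPair m n i k w L L') := by
  simpa only [isYChain_iff_isHeckeChain, isZPair_iff_isHeckePair, swapAt_comp i w fun c => X - C c]
    using statement4_general ℂ (polyL0 m) k (fun j => X - C (w j)) hi hin
      (isCoprime_X_sub_C_of_isUnit_sub (sub_ne_zero.2 hw).isUnit)
end
end

section
/- Suppose 1 ≤ i ≤ n−1 and w_i = w_{i+1} =: w. For every ((L_•),(L'_•)) ∈ Z(k̲)^i_w̲, the subspace (L_i + L'_i)/L_{i−1} of L_{i+1}/L_{i−1} is contained in the kernel of the endomorphism of L_{i+1}/L_{i−1} induced by multiplication by (z − w); consequently dim_ℂ ker((z−w)|_{L_{i+1}/L_{i−1}}) + dim_ℂ((L_i ∩ L'_i)/L_{i−1}) ≥ k_i + k_{i+1}. -/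
/-!
The images of `P` and `P'` in `B/A` have sum `(P + P')/A` and intersection `(P ∩ P')/A`. If `r`
kills both images it kills their sum, whose dimension is
`dim (P/A) + dim (P'/A) - dim ((P ∩ P')/A)`. A point of the correspondence is this situation with
`A = L_{i-1}`, `P = L_i`, `P' = L'_i`, `B = L_{i+1}` and `r = z - w`.
-/

open Polynomial

set_option synthInstance.maxHeartbeats 1000000
set_option maxHeartbeats 1000000

noncomputable section

section Subquotient

variable {𝕜 R M : Type*} [CommRing 𝕜] [Ring R] [Algebra 𝕜 R] [AddCommGroup M] [Module R M]
  [Module 𝕜 M] [IsScalarTower 𝕜 R M] {A P P' B : Submodule R M}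

variable (𝕜 A P B) in
/-- The image of `P ∩ B` in `B/A`, as a `𝕜`-submodule; for `A ≤ P ≤ B` it is `P/A` inside `B/A`. -/
def subquotient : Submodule 𝕜 (B ⧸ A.comap B.subtype) :=
  ((P.comap B.subtype).map (A.comap B.subtype).mkQ).restrictScalars 𝕜

lemma mkQ_mem_subquotient_iff (hA : A ≤ P) {x : B} :
    (A.comap B.subtype).mkQ x ∈ subquotient 𝕜 A P B ↔ (x : M) ∈ P := by
  have hAP : A.comap B.subtype ≤ P.comap B.subtype := Submodule.comap_mono hA
  rw [subquotient, Submodule.restrictScalars_mem, ← Submodule.mem_comap,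
    Submodule.comap_map_mkQ, sup_eq_right.2 hAP, Submodule.mem_comap, Submodule.subtype_apply]

lemma subquotient_inf (hA : A ≤ P) (hA' : A ≤ P') :
    subquotient 𝕜 A (P ⊓ P') B = subquotient 𝕜 A P B ⊓ subquotient 𝕜 A P' B := by
  ext x
  obtain ⟨x, rfl⟩ := Submodule.mkQ_surjective _ x
  rw [Submodule.mem_inf, mkQ_mem_subquotient_iff hA, mkQ_mem_subquotient_iff hA',
    mkQ_mem_subquotient_iff (le_inf hA hA'), Submodule.mem_inf]

lemma subquotient_sup (hB : P ≤ B) (hB' : P' ≤ B) :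
    subquotient 𝕜 A (P ⊔ P') B = subquotient 𝕜 A P B ⊔ subquotient 𝕜 A P' B := by
  have hcomap : (P ⊔ P').comap B.subtype = P.comap B.subtype ⊔ P'.comap B.subtype :=
    Submodule.submoduleOf_sup_of_le hB hB'
  simp only [subquotient, hcomap, Submodule.map_sup, Submodule.restrictScalars_sup]

variable (A) in
/-- The map `P/A → B/A` induced by the inclusion `P ≤ B`. -/
def quotientInclusion (hB : P ≤ B) : (P ⧸ A.comap P.subtype) →ₗ[R] (B ⧸ A.comap B.subtype) :=
  Submodule.mapQ _ _ (Submodule.inclusion hB)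
    (by rw [← Submodule.comap_comp, Submodule.subtype_comp_inclusion])

lemma quotientInclusion_injective (hB : P ≤ B) : Function.Injective (quotientInclusion A hB) := by
  rw [← LinearMap.ker_eq_bot, quotientInclusion, Submodule.ker_mapQ,
    ← Submodule.comap_comp, Submodule.subtype_comp_inclusion, Submodule.mkQ_map_self]

lemma range_quotientInclusion (hB : P ≤ B) :
    LinearMap.range ((quotientInclusion A hB).restrictScalars 𝕜) = subquotient 𝕜 A P B := by
  rw [LinearMap.range_restrictScalars, quotientInclusion, Submodule.range_mapQ,
    Submodule.range_inclusion, subquotient]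

lemma finrank_subquotient (hB : P ≤ B) :
    Module.finrank 𝕜 (subquotient 𝕜 A P B) = Module.finrank 𝕜 (P ⧸ A.comap P.subtype) := by
  rw [← range_quotientInclusion hB]
  exact LinearMap.finrank_range_of_inj (f := (quotientInclusion A hB).restrictScalars 𝕜)
    (quotientInclusion_injective hB)

lemma ker_factor_eq_subquotient (hA : A ≤ P) :
    LinearMap.ker
        ((Submodule.factor (Submodule.comap_mono (f := B.subtype) hA)).restrictScalars 𝕜) =
      subquotient 𝕜 A P B := by
  rw [LinearMap.ker_restrictScalars, Submodule.factor, Submodule.ker_mapQ, Submodule.comap_id,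
    subquotient]

lemma finite_quotient_of_le_of_le (hA : A ≤ P) (hB : P ≤ B)
    [Module.Finite 𝕜 (P ⧸ A.comap P.subtype)] [Module.Finite 𝕜 (B ⧸ P.comap B.subtype)] :
    Module.Finite 𝕜 (B ⧸ A.comap B.subtype) := by
  let g : (B ⧸ A.comap B.subtype) →ₗ[𝕜] (B ⧸ P.comap B.subtype) :=
    (Submodule.factor (Submodule.comap_mono hA)).restrictScalars 𝕜
  have hexact : Function.Exact ((quotientInclusion A hB).restrictScalars 𝕜) g := by
    rw [LinearMap.exact_iff, ker_factor_eq_subquotient hA, range_quotientInclusion hB]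
  have hsurj : Function.Surjective g :=
    Submodule.factor_surjective (Submodule.comap_mono (f := B.subtype) hA)
  exact .of_exact hexact hsurj

lemma subquotient_le_ker_lsmul {r : R} (hr : ∀ x ∈ P, r • x ∈ A) :
    subquotient 𝕜 A P B ≤ LinearMap.ker (Algebra.lsmul 𝕜 𝕜 (B ⧸ A.comap B.subtype) r) := by
  rintro _ ⟨x, hx, rfl⟩
  exact (Submodule.Quotient.mk_eq_zero _).2 (hr x hx)

end Subquotient

theorem statement7_general {𝕜 R M : Type*} [Field 𝕜] [Ring R] [Algebra 𝕜 R]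
    [AddCommGroup M] [Module R M] [Module 𝕜 M] [IsScalarTower 𝕜 R M]
    {A P P' B : Submodule R M} [FiniteDimensional 𝕜 (B ⧸ A.comap B.subtype)]
    (hA : A ≤ P) (hA' : A ≤ P') (hB : P ≤ B) (hB' : P' ≤ B)
    {r : R} (hr : ∀ x ∈ P, r • x ∈ A) (hr' : ∀ x ∈ P', r • x ∈ A) :
    subquotient 𝕜 A (P ⊔ P') B ≤
        LinearMap.ker (Algebra.lsmul 𝕜 𝕜 (B ⧸ A.comap B.subtype) r) ∧
      Module.finrank 𝕜 (P ⧸ A.comap P.subtype) + Module.finrank 𝕜 (P' ⧸ A.comap P'.subtype) ≤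
        Module.finrank 𝕜 (LinearMap.ker (Algebra.lsmul 𝕜 𝕜 (B ⧸ A.comap B.subtype) r)) +
          Module.finrank 𝕜 (↥(P ⊓ P') ⧸ A.comap (P ⊓ P').subtype) := by
  have hker : subquotient 𝕜 A (P ⊔ P') B ≤
      LinearMap.ker (Algebra.lsmul 𝕜 𝕜 (B ⧸ A.comap B.subtype) r) := by
    rw [subquotient_sup hB hB']
    exact sup_le (subquotient_le_ker_lsmul hr) (subquotient_le_ker_lsmul hr')
  refine ⟨hker, ?_⟩
  calc Module.finrank 𝕜 (P ⧸ A.comap P.subtype) + Module.finrank 𝕜 (P' ⧸ A.comap P'.subtype)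
      = Module.finrank 𝕜 (subquotient 𝕜 A P B) + Module.finrank 𝕜 (subquotient 𝕜 A P' B) := by
        rw [finrank_subquotient hB, finrank_subquotient hB']
    _ = Module.finrank 𝕜 (subquotient 𝕜 A (P ⊔ P') B) +
          Module.finrank 𝕜 (subquotient 𝕜 A (P ⊓ P') B) := by
        rw [subquotient_sup hB hB', subquotient_inf hA hA',
          Submodule.finrank_sup_add_finrank_inf_eq]
    _ ≤ Module.finrank 𝕜 (LinearMap.ker (Algebra.lsmul 𝕜 𝕜 (B ⧸ A.comap B.subtype) r)) +
          Module.finrank 𝕜 (↥(P ⊓ P') ⧸ A.comap (P ⊓ P').subtype) := by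
        rw [finrank_subquotient (inf_le_left.trans hB)]
        gcongr
        exact Submodule.finrank_mono hker

namespace IsYChain

variable {m n i : ℕ} {k : ℕ → ℕ} {w : ℕ → ℂ} {L : ℕ → SubM m}

lemma le_succ (hL : IsYChain m n k w L) (hi : i < n) : L i ≤ L (i + 1) :=
  hL.2.1 i hi

lemma finiteDimensional_quotient_succ (hL : IsYChain m n k w L) (hi : i < n) :
    FiniteDimensional ℂ (QuotMod m (L i) (L (i + 1))) :=
  hL.2.2.1 i hi

lemma fdim_succ (hL : IsYChain m n k w L) (hi : i < n) : fdim m (L i) (L (i + 1)) = k (i + 1) :=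
  hL.2.2.2.1 i hi

lemma X_sub_C_smul_mem (hL : IsYChain m n k w L) (hi : i < n) :
    ∀ x ∈ L (i + 1), (X - C (w (i + 1))) • x ∈ L i :=
  hL.2.2.2.2 i hi

lemma finiteDimensional_quotient_add_two (hL : IsYChain m n k w L) (hi : i + 1 < n) :
    FiniteDimensional ℂ (QuotMod m (L i) (L (i + 2))) := by
  have hi' : i < n := by omega
  have := hL.finiteDimensional_quotient_succ hi'
  have := hL.finiteDimensional_quotient_succ hi
  exact finite_quotient_of_le_of_le (hL.le_succ hi') (hL.le_succ hi)

end IsYChain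

lemma swapAt_self {α : Type*} (i : ℕ) (f : ℕ → α) : swapAt i f i = f (i + 1) :=
  if_pos rfl

namespace IsZPair

variable {m n i : ℕ} {k : ℕ → ℕ} {w : ℕ → ℂ} {L L' : ℕ → SubM m}

lemma le_right (hZ : IsZPair m n (i + 1) k w L L') (hi : i < n) : L i ≤ L' (i + 1) := by
  rw [hZ.2.2 i (by omega)]
  exact hZ.2.1.le_succ hi

lemma right_le (hZ : IsZPair m n (i + 1) k w L L') (hi : i + 1 < n) :
    L' (i + 1) ≤ L (i + 2) := by
  rw [hZ.2.2 (i + 2) (by omega)]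
  exact hZ.2.1.le_succ hi

lemma fdim_right (hZ : IsZPair m n (i + 1) k w L L') (hi : i < n) :
    fdim m (L i) (L' (i + 1)) = k (i + 2) := by
  rw [hZ.2.2 i (by omega), hZ.2.1.fdim_succ hi, swapAt_self]

lemma X_sub_C_smul_mem_right (hZ : IsZPair m n (i + 1) k w L L') (hi : i < n) :
    ∀ x ∈ L' (i + 1), (X - C (w (i + 2))) • x ∈ L i := by
  rw [hZ.2.2 i (by omega), ← swapAt_self (i + 1) w]
  exact hZ.2.1.X_sub_C_smul_mem hi

end IsZPair

/-- when `w_i = w_{i+1} = w`, for any point of `Z(k)^i_w` the subspace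
`(L_i + L'_i)/L_{i-1}` of `L_{i+1}/L_{i-1}` lies in the kernel of the endomorphism
induced by multiplication by `z - w`; consequently
`dim ker((z-w)|_{L_{i+1}/L_{i-1}}) + dim((L_i ∩ L'_i)/L_{i-1}) ≥ k_i + k_{i+1}`. -/
theorem statement7 (m : ℕ) (hm : 2 ≤ m) (n : ℕ) (k : ℕ → ℕ) (w : ℕ → ℂ)
    (hk : ∀ j, 1 ≤ j → j ≤ n → 1 ≤ k j ∧ k j ≤ m - 1)
    (i : ℕ) (hi : 1 ≤ i) (hin : i + 1 ≤ n) (hww : w i = w (i + 1))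
    (L L' : ℕ → SubM m) (hZ : IsZPair m n i k w L L') :
    Submodule.restrictScalars ℂ
        (Submodule.map (Submodule.mkQ ((L (i - 1)).comap (L (i + 1)).subtype))
          ((L i ⊔ L' i).comap (L (i + 1)).subtype)) ≤
      LinearMap.ker
        (quotSmul m (Polynomial.X - Polynomial.C (w i)) (L (i - 1)) (L (i + 1))) ∧
    k i + k (i + 1) ≤
      Module.finrank ℂ
          ↥(LinearMap.ker
            (quotSmul m (Polynomial.X - Polynomial.C (w i)) (L (i - 1)) (L (i + 1)))) +
        fdim m (L (i - 1)) (L i ⊓ L' i) := by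
  obtain ⟨j, rfl⟩ := Nat.exists_eq_add_of_le' hi
  have hj : j < n := by omega
  have hL := hZ.1
  have := hL.finiteDimensional_quotient_add_two hin
  rw [← hL.fdim_succ hj, ← hZ.fdim_right hj]
  exact statement7_general (hL.le_succ hj) (hZ.le_right hj) (hL.le_succ hin) (hZ.right_le hin)
    (hL.X_sub_C_smul_mem hj) (hww ▸ hZ.X_sub_C_smul_mem_right hj)
end
end
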